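/- Intuitionistic propositional logic is incomplete with respect to Base Semantics: there exist a set of formulas Γ and a formula A of L such that Γ ⊨ A but Γ ⊬_IL A. (Theorem 1.) -/

import Mathlib

/-!
Base Semantics is bivalent on each single base: since `BValid B` reads `→` as material implication,
excluded middle is valid on every consistent base. Excluded middle for an atom is not
intuitionistically derivable: intuitionistic deduction is sound for valuations in an arbitrary
Heyting algebra (`IL.sound`), and in the three-element chain `0 < 1 < 2` the middle element `1` has
pseudocomplement `0`, so that `1 ⊔ 1ᶜ = 1 ≠ ⊤`. Hence `Γ = ∅` and `A = p₀ ∨ ¬p₀` witness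
incompleteness.
-/

/-- Formulas of the propositional language L. -/
inductive Formula : Type
  | atom : ℕ → Formula
  | bot  : Formula
  | and  : Formula → Formula → Formula
  | or   : Formula → Formula → Formula
  | imp  : Formula → Formula → Formula
deriving DecidableEq

/-- Negation: ¬A := A → ⊥. -/
def Formula.neg (A : Formula) : Formula := .imp A .bot

/-- An atom: `some n` is the n-th propositional atom p_n, `none` is ⊥. -/
def atomFormula : Option ℕ → Formula
  | some n => .atom n
  | none   => .bot

/-- A production rule: finitely many atomic premises (none of which is ⊥)
    and an atomic conclusion (possibly ⊥). -/
structure AtomicRule : Type where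
  prems : List ℕ
  concl : Option ℕ

/-- An atomic base: a set of production rules. -/
abbrev AtomicBase : Type := Set AtomicRule

/-- Derivability ⊢_B a of an atom in a base B. -/
inductive AtomDerives (B : AtomicBase) : Option ℕ → Prop
  | rule (r : AtomicRule) (hr : r ∈ B)
      (h : ∀ p ∈ r.prems, AtomDerives B (some p)) : AtomDerives B r.concl

/-- B is consistent iff ⊥ is not derivable in B. -/
def Consistent (B : AtomicBase) : Prop := ¬ AtomDerives B none

/-- ⊨_B A (validity of A on the base B, i.e. ∅ ⊨_B A). -/
def BValid (B : AtomicBase) : Formula → Prop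
  | .atom n  => AtomDerives B (some n)
  | .bot     => AtomDerives B none
  | .and X Y => BValid B X ∧ BValid B Y
  | .or X Y  => BValid B X ∨ BValid B Y
  | .imp X Y => BValid B X → BValid B Y

/-- Γ ⊨_B A. -/
def BCons (B : AtomicBase) (Γ : Set Formula) (A : Formula) : Prop :=
  (∀ G ∈ Γ, BValid B G) → BValid B A

/-- Logical consequence Γ ⊨ A: Γ ⊨_B A on every consistent atomic base. -/
def Cons (Γ : Set Formula) (A : Formula) : Prop :=
  ∀ B : AtomicBase, Consistent B → BCons B Γ A

/-- Intuitionistic propositional natural deduction. -/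
inductive IL : Set Formula → Formula → Prop
  | ax    {Γ A} : A ∈ Γ → IL Γ A
  | andI  {Γ A B} : IL Γ A → IL Γ B → IL Γ (.and A B)
  | andE1 {Γ A B} : IL Γ (.and A B) → IL Γ A
  | andE2 {Γ A B} : IL Γ (.and A B) → IL Γ B
  | orI1  {Γ A B} : IL Γ A → IL Γ (.or A B)
  | orI2  {Γ A B} : IL Γ B → IL Γ (.or A B)
  | orE   {Γ A B C} : IL Γ (.or A B) → IL (insert A Γ) C → IL (insert B Γ) C → IL Γ C
  | impI  {Γ A B} : IL (insert A Γ) B → IL Γ (.imp A B)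
  | impE  {Γ A B} : IL Γ (.imp A B) → IL Γ A → IL Γ B
  | botE  {Γ A} : IL Γ .bot → IL Γ A

/-- Classical propositional natural deduction: IL + double negation elimination. -/
inductive CL : Set Formula → Formula → Prop
  | ax    {Γ A} : A ∈ Γ → CL Γ A
  | andI  {Γ A B} : CL Γ A → CL Γ B → CL Γ (.and A B)
  | andE1 {Γ A B} : CL Γ (.and A B) → CL Γ A
  | andE2 {Γ A B} : CL Γ (.and A B) → CL Γ B
  | orI1  {Γ A B} : CL Γ A → CL Γ (.or A B)
  | orI2  {Γ A B} : CL Γ B → CL Γ (.or A B)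
  | orE   {Γ A B C} : CL Γ (.or A B) → CL (insert A Γ) C → CL (insert B Γ) C → CL Γ C
  | impI  {Γ A B} : CL (insert A Γ) B → CL Γ (.imp A B)
  | impE  {Γ A B} : CL Γ (.imp A B) → CL Γ A → CL Γ B
  | botE  {Γ A} : CL Γ .bot → CL Γ A
  | dne   {Γ A} : CL Γ ((A.neg).neg) → CL Γ A

/-- The value of a formula in a Heyting algebra `H` under the valuation `v` of the atoms. -/
def Formula.heytingEval {H : Type*} [HeytingAlgebra H] (v : ℕ → H) : Formula → H
  | .atom n  => v n
  | .bot     => ⊥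
  | .and X Y => X.heytingEval v ⊓ Y.heytingEval v
  | .or X Y  => X.heytingEval v ⊔ Y.heytingEval v
  | .imp X Y => X.heytingEval v ⇨ Y.heytingEval v

/-- Soundness of `IL` for Heyting algebras. The set `Γ` may be infinite and `H` need not be complete,
so the meet of the values of `Γ` is replaced by an arbitrary lower bound `c` of these values. -/
theorem IL.sound {H : Type*} [HeytingAlgebra H] (v : ℕ → H) {Γ : Set Formula} {A : Formula}
    (h : IL Γ A) : ∀ c : H, (∀ G ∈ Γ, c ≤ G.heytingEval v) → c ≤ A.heytingEval v := by
  -- Adding a hypothesis `A` to the context amounts to meeting the lower bound with the value of `A`.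
  have extend : ∀ {Γ : Set Formula} {A : Formula} {c : H}, (∀ G ∈ Γ, c ≤ G.heytingEval v) →
      ∀ G ∈ insert A Γ, c ⊓ A.heytingEval v ≤ G.heytingEval v := by
    rintro Γ A c hc G (rfl | hG)
    · exact inf_le_right
    · exact inf_le_left.trans (hc G hG)
  induction h with
  | ax hA => exact fun c hc => hc _ hA
  | andI _ _ ih₁ ih₂ => exact fun c hc => le_inf (ih₁ c hc) (ih₂ c hc)
  | andE1 _ ih => exact fun c hc => (ih c hc).trans inf_le_left
  | andE2 _ ih => exact fun c hc => (ih c hc).trans inf_le_right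
  | orI1 _ ih => exact fun c hc => (ih c hc).trans le_sup_left
  | orI2 _ ih => exact fun c hc => (ih c hc).trans le_sup_right
  | orE _ _ _ ih ih₁ ih₂ =>
    intro c hc
    -- Distributivity: `c = c ⊓ (A ⊔ B) = (c ⊓ A) ⊔ (c ⊓ B)`.
    refine (le_inf le_rfl (ih c hc)).trans ?_
    rw [Formula.heytingEval, inf_sup_left]
    exact sup_le (ih₁ _ (extend hc)) (ih₂ _ (extend hc))
  | impI _ ih => exact fun c hc => le_himp_iff.mpr (ih _ (extend hc))
  | impE _ _ ih₁ ih₂ =>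
    exact fun c hc => (le_inf le_rfl (ih₂ c hc)).trans (le_himp_iff.mp (ih₁ c hc))
  | botE _ ih => exact fun c hc => (ih c hc).trans bot_le

/-- Theorem 1: intuitionistic propositional logic is incomplete with respect to
    Base Semantics: there are Γ and A with Γ ⊨ A but Γ ⊬_IL A. -/
theorem thm1_intuitionistic_incompleteness :
    ∃ (Γ : Set Formula) (A : Formula), Cons Γ A ∧ ¬ IL Γ A := by
  refine ⟨∅, .or (.atom 0) (Formula.neg (.atom 0)), ?_, ?_⟩
  · intro B _ _
    by_cases h : AtomDerives B (some 0)
    · exact Or.inl h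
    · exact Or.inr fun h' => absurd h' h
  · intro h
    have key := IL.sound (H := Fin 3) (fun _ => 1) h ⊤ (fun G hG => absurd hG (Set.notMem_empty G))
    have hlt : ¬ ((⊤ : Fin 3) ≤ 1 ⊔ (1 ⇨ ⊥)) := by decide
    exact hlt key
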